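/- arXiv:1902.01751 — 9 statements merged into one kernel-verified Lean document; each statement's English description precedes it below -/
import Mathlib

section
/- Let a = (a₁,a₂,a₃) be a triple of positive integers and let C, D be 3×3 matrices with non-negative integer entries such that B_a = C·D and (a₁,a₂,a₃) = (1,1,1)·D. Define ǎ_i = Σ_{j=1}^{3} d_{ij} (the i-th row sum of D) and ȟ = 1 + ǎ₁ + ǎ₂ + ǎ₃. Then ȟ = a₁ + a₂ + a₃ + 1 and C·(ǎ₁,ǎ₂,ǎ₃)ᵀ = (ȟ,ȟ,ȟ)ᵀ; consequently, for every t ∈ ℂ, the polynomial f_C(x,y,z) + w^{ȟ} − t·xyzw is weighted homogeneous of degree ȟ with respect to the weights (ǎ₁,ǎ₂,ǎ₃,1) on (x,y,z,w), i.e., f_C(λ^{ǎ₁}x, λ^{ǎ₂}y, λ^{ǎ₃}z) + (λw)^{ȟ} − t·(λ^{ǎ₁}x)(λ^{ǎ₂}y)(λ^{ǎ₃}z)(λw) = λ^{ȟ}(f_C(x,y,z) + w^{ȟ} − t·xyzw) for all λ ∈ ℂ. -/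
open Matrix BigOperators

noncomputable section

/-- `f_C(x,y,z) = Σ_{i=1}^{3} x^{c_{i1}} y^{c_{i2}} z^{c_{i3}}` for a 3×3 matrix `C`
with non-negative integer entries. -/
def fC (C : Matrix (Fin 3) (Fin 3) ℕ) : (Fin 3 → ℂ) → ℂ :=
  fun v => ∑ i : Fin 3, ∏ j : Fin 3, v j ^ C i j

/-- `φ_D(u₁,u₂,u₃) = (u₁^{d_{i1}} u₂^{d_{i2}} u₃^{d_{i3}})_{i=1}^{3}`. -/
def phiD (D : Matrix (Fin 3) (Fin 3) ℕ) : (Fin 3 → ℂ) → (Fin 3 → ℂ) :=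
  fun u i => ∏ j : Fin 3, u j ^ D i j

/-- The matrix `B_a` with rows `(a₁+1,a₂,a₃)`, `(a₁,a₂+1,a₃)`, `(a₁,a₂,a₃+1)`. -/
def Bmat (a : Fin 3 → ℕ) : Matrix (Fin 3) (Fin 3) ℕ :=
  fun i j => a j + if i = j then 1 else 0

/-- `G_a(u₁,u₂,u₃) = u₁^{a₁+1}u₂^{a₂}u₃^{a₃} + u₁^{a₁}u₂^{a₂+1}u₃^{a₃} + u₁^{a₁}u₂^{a₂}u₃^{a₃+1}`. -/
def Ga (a : Fin 3 → ℕ) : (Fin 3 → ℂ) → ℂ :=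
  fun u => u 0 ^ (a 0 + 1) * u 1 ^ a 1 * u 2 ^ a 2
         + u 0 ^ a 0 * u 1 ^ (a 1 + 1) * u 2 ^ a 2
         + u 0 ^ a 0 * u 1 ^ a 1 * u 2 ^ (a 2 + 1)

/-- `H_a(u₁,u₂,u₃) = u₁^{a₁}u₂^{a₂}u₃^{a₃}`. -/
def Ha (a : Fin 3 → ℕ) : (Fin 3 → ℂ) → ℂ :=
  fun u => u 0 ^ a 0 * u 1 ^ a 1 * u 2 ^ a 2

/-- Determinant of a matrix of natural numbers, computed over `ℤ`. -/
def detZ (M : Matrix (Fin 3) (Fin 3) ℕ) : ℤ :=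
  (M.map (fun n : ℕ => (n : ℤ))).det

/-- `f` has an isolated critical point at the origin of `ℂ³`: the derivative of `f`
vanishes at `0`, and there is a punctured neighborhood of `0` containing no critical
point of `f`. -/
def IsolatedCriticalAtZero (f : (Fin 3 → ℂ) → ℂ) : Prop :=
  fderiv ℂ f 0 = 0 ∧
  ∃ ε : ℝ, ε > 0 ∧ ∀ p : Fin 3 → ℂ, p ≠ 0 → ‖p‖ < ε → fderiv ℂ f p ≠ 0

theorem stmt_5 (a : Fin 3 → ℕ) (ha : ∀ j, 0 < a j)
    (C D : Matrix (Fin 3) (Fin 3) ℕ)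
    (hB : Bmat a = C * D) (hcol : ∀ j, (∑ i : Fin 3, D i j) = a j)
    (av : Fin 3 → ℕ) (hav : ∀ i, av i = ∑ j : Fin 3, D i j)
    (hv : ℕ) (hhv : hv = 1 + av 0 + av 1 + av 2) :
    hv = a 0 + a 1 + a 2 + 1 ∧
    (∀ i : Fin 3, (∑ j : Fin 3, C i j * av j) = hv) ∧
    ∀ t lam x y z w : ℂ,
      fC C ![lam ^ av 0 * x, lam ^ av 1 * y, lam ^ av 2 * z] + (lam * w) ^ hv
        - t * ((lam ^ av 0 * x) * (lam ^ av 1 * y) * (lam ^ av 2 * z) * (lam * w))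
      = lam ^ hv * (fC C ![x, y, z] + w ^ hv - t * (x * y * z * w)) := by
  have h1 : hv = a 0 + a 1 + a 2 + 1 := by
    have c0 := hcol 0
    have c1 := hcol 1
    have c2 := hcol 2
    have r0 := hav 0
    have r1 := hav 1
    have r2 := hav 2
    simp only [Fin.sum_univ_three] at c0 c1 c2 r0 r1 r2
    omega
  have h2 : ∀ i : Fin 3, (∑ j : Fin 3, C i j * av j) = hv := by
    intro i
    have e : ∑ k : Fin 3, Bmat a i k = ∑ j : Fin 3, C i j * av j := by
      rw [hB]
      simp only [Matrix.mul_apply, hav, Finset.mul_sum]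
      exact Finset.sum_comm
    rw [← e, h1]
    fin_cases i <;> simp [Bmat, Fin.sum_univ_three] <;> omega
  refine ⟨h1, h2, ?_⟩
  intro t lam x y z w
  have h3 : fC C ![lam ^ av 0 * x, lam ^ av 1 * y, lam ^ av 2 * z]
      = lam ^ hv * fC C ![x, y, z] := by
    unfold fC
    rw [Finset.mul_sum]
    refine Finset.sum_congr rfl fun i _ => ?_
    rw [← h2 i]
    simp only [Fin.prod_univ_three, Fin.sum_univ_three, Matrix.cons_val, mul_pow, ← pow_mul,
      pow_add, mul_comm (C i _) (av _)]
    ring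
  have h4 : lam ^ hv = lam * lam ^ av 0 * lam ^ av 1 * lam ^ av 2 := by
    rw [hhv, pow_add, pow_add, pow_add, pow_one]
  rw [h3, mul_pow]
  linear_combination (t * (x * y * z * w)) * h4
end
end

section
/- For the weight a = (6,14,21) (the weight of the E₁₂-singularity), there exist 3×3 matrices C and D with non-negative integer entries such that |det D| = 1, B_a = C·D, (6,14,21) = (1,1,1)·D, f_C(x,y,z) = x³ + y⁷ + z² after a permutation of the variables (x,y,z), and f_C has an isolated critical point at the origin of ℂ³ (all partial derivatives of f_C vanish at 0, and there is a punctured neighborhood of 0 containing no critical point of f_C). -/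
open Matrix BigOperators

noncomputable section

lemma fC_diag_hasFDerivAt (p : Fin 3 → ℂ) :
    HasFDerivAt (fC !![7,0,0;0,3,0;0,0,2])
      ((7 * p 0 ^ 6) • ContinuousLinearMap.proj (R := ℂ) (φ := fun _ : Fin 3 => ℂ) 0
        + (3 * p 1 ^ 2) • ContinuousLinearMap.proj (R := ℂ) (φ := fun _ : Fin 3 => ℂ) 1
        + (2 * p 2) • ContinuousLinearMap.proj (R := ℂ) (φ := fun _ : Fin 3 => ℂ) 2) p := by
  have hf : fC !![7,0,0;0,3,0;0,0,2] = fun v => v 0 ^ 7 + v 1 ^ 3 + v 2 ^ 2 := by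
    funext v
    simp [fC, Fin.sum_univ_three, Fin.prod_univ_three]
  rw [hf]
  have h (i : Fin 3) : HasFDerivAt (fun v : Fin 3 → ℂ => v i)
      (ContinuousLinearMap.proj (R := ℂ) (φ := fun _ : Fin 3 => ℂ) i) p :=
    hasFDerivAt_apply i p
  have := (((h 0).pow 7).add ((h 1).pow 3)).add ((h 2).pow 2)
  refine this.congr_fderiv ?_
  ext v
  simp

theorem stmt_6 :
    ∃ C D : Matrix (Fin 3) (Fin 3) ℕ,
      |detZ D| = 1 ∧
      Bmat ![6, 14, 21] = C * D ∧
      (∀ j, (∑ i : Fin 3, D i j) = ![6, 14, 21] j) ∧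
      (∃ σ : Equiv.Perm (Fin 3),
        ∀ x y z : ℂ, fC C (fun i => ![x, y, z] (σ i)) = x ^ 3 + y ^ 7 + z ^ 2) ∧
      IsolatedCriticalAtZero (fC C) := by
  refine ⟨!![7,0,0;0,3,0;0,0,2], !![1,2,3;2,5,7;3,7,11], ?_, ?_, ?_, ?_, ?_, ?_⟩
  · simp [detZ, Matrix.det_fin_three]
  · ext i j
    fin_cases i <;> fin_cases j <;> simp [Bmat, Matrix.mul_apply, Fin.sum_univ_three]
  · intro j
    fin_cases j <;> simp [Fin.sum_univ_three]
  · refine ⟨Equiv.swap 0 1, fun x y z => ?_⟩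
    have h2 : (Equiv.swap (0 : Fin 3) 1) 2 = 2 := by decide
    simp [fC, Fin.sum_univ_three, Fin.prod_univ_three, h2]
    ring
  · rw [(fC_diag_hasFDerivAt 0).fderiv]
    ext v
    simp
  · refine ⟨1, one_pos, fun p hp _ h => hp ?_⟩
    rw [(fC_diag_hasFDerivAt p).fderiv] at h
    have e (i : Fin 3) := DFunLike.congr_fun h (Pi.single i (1 : ℂ))
    have e0 := e 0
    have e1 := e 1
    have e2 := e 2
    simp at e0 e1 e2
    funext i
    fin_cases i <;> simp [e0, e1, e2]
end
end

section
/- For the weight a = (4,10,15) (the weight of the E₁₃-singularity), there exist 3×3 matrices C and D with non-negative integer entries such that |det D| = 1, B_a = C·D, (4,10,15) = (1,1,1)·D, f_C(x,y,z) = x³y + y⁵ + z² after a permutation of the variables (x,y,z) (the normal form of the strange dual singularity Z₁₁), and f_C has an isolated critical point at the origin of ℂ³ (all partial derivatives of f_C vanish at 0, and there is a punctured neighborhood of 0 containing no critical point of f_C). -/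
open Matrix BigOperators

noncomputable section

lemma fC_hasFDerivAt (p : Fin 3 → ℂ) :
    HasFDerivAt (fC !![0,5,0;3,1,0;0,0,2])
      ((3 * p 0 ^ 2 * p 1) • (ContinuousLinearMap.proj (R := ℂ) (φ := fun _ : Fin 3 => ℂ) 0)
        + (5 * p 1 ^ 4 + p 0 ^ 3) • (ContinuousLinearMap.proj (R := ℂ) (φ := fun _ : Fin 3 => ℂ) 1)
        + (2 * p 2) • (ContinuousLinearMap.proj (R := ℂ) (φ := fun _ : Fin 3 => ℂ) 2)) p := by
  have e : fC !![0,5,0;3,1,0;0,0,2] =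
      fun v : Fin 3 → ℂ => v 1 ^ 5 + v 0 ^ 3 * v 1 + v 2 ^ 2 := by
    funext v
    simp [fC, Fin.sum_univ_three, Fin.prod_univ_three]
  rw [e]
  have h (i : Fin 3) : HasFDerivAt (fun v : Fin 3 → ℂ => v i)
      (ContinuousLinearMap.proj (R := ℂ) (φ := fun _ : Fin 3 => ℂ) i) p :=
    hasFDerivAt_apply i p
  refine ((((h 1).pow 5).add (((h 0).pow 3).mul (h 1))).add ((h 2).pow 2)).congr_fderiv ?_
  ext i
  simp
  ring

theorem stmt_7 :
    ∃ C D : Matrix (Fin 3) (Fin 3) ℕ,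
      |detZ D| = 1 ∧
      Bmat ![4, 10, 15] = C * D ∧
      (∀ j, (∑ i : Fin 3, D i j) = ![4, 10, 15] j) ∧
      (∃ σ : Equiv.Perm (Fin 3),
        ∀ x y z : ℂ, fC C (fun i => ![x, y, z] (σ i)) = x ^ 3 * y + y ^ 5 + z ^ 2) ∧
      IsolatedCriticalAtZero (fC C) := by
  refine ⟨!![0,5,0;3,1,0;0,0,2], !![1,3,4;1,2,3;2,5,8], ?_, ?_, ?_, ⟨Equiv.refl _, ?_⟩, ?_, 1,
    one_pos, ?_⟩
  · simp [detZ, Matrix.det_fin_three]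
  · ext i j
    fin_cases i <;> fin_cases j <;> simp [Bmat, Matrix.mul_apply, Fin.sum_univ_three]
  · intro j
    fin_cases j <;> simp [Fin.sum_univ_three]
  · intro x y z
    simp [fC, Fin.sum_univ_three, Fin.prod_univ_three]
    ring
  · rw [(fC_hasFDerivAt 0).fderiv]
    ext i
    simp
  · intro p hp _ h
    rw [(fC_hasFDerivAt p).fderiv] at h
    have h0 := DFunLike.congr_fun h (Pi.single 0 1)
    have h1 := DFunLike.congr_fun h (Pi.single 1 1)
    have h2 := DFunLike.congr_fun h (Pi.single 2 1)
    simp at h0 h1 h2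
    apply hp
    have : p 0 = 0 ∧ p 1 = 0 := by
      rcases h0 with h0 | h0 <;> simp [h0] at h1 <;> exact ⟨by assumption, by assumption⟩
    ext i
    fin_cases i <;> simp [this, h2]
end
end

section
/- For the weight a = (6,8,15) (the weight of the Z₁₁-singularity), there exist 3×3 matrices C and D with non-negative integer entries such that |det D| = 1, B_a = C·D, (6,8,15) = (1,1,1)·D, f_C(x,y,z) = x³ + xy⁵ + z² after a permutation of the variables (x,y,z) (the normal form of the strange dual singularity E₁₃), and f_C has an isolated critical point at the origin of ℂ³ (all partial derivatives of f_C vanish at 0, and there is a punctured neighborhood of 0 containing no critical point of f_C). -/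
open Matrix BigOperators

noncomputable section

lemma fC_eq_aux (v : Fin 3 → ℂ) :
    fC !![1, 5, 0; 3, 0, 0; 0, 0, 2] v = v 0 * v 1 ^ 5 + v 0 ^ 3 + v 2 ^ 2 := by
  simp [fC, Fin.sum_univ_three, Fin.prod_univ_three]

lemma fC_hasFDerivAt_aux (p : Fin 3 → ℂ) :
    HasFDerivAt (fC !![1, 5, 0; 3, 0, 0; 0, 0, 2])
      ((p 1 ^ 5 + 3 * p 0 ^ 2) • ContinuousLinearMap.proj (R := ℂ) (φ := fun _ : Fin 3 => ℂ) 0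
        + (5 * p 0 * p 1 ^ 4) • ContinuousLinearMap.proj (R := ℂ) (φ := fun _ : Fin 3 => ℂ) 1
        + (2 * p 2) • ContinuousLinearMap.proj (R := ℂ) (φ := fun _ : Fin 3 => ℂ) 2) p := by
  have e : fC !![1, 5, 0; 3, 0, 0; 0, 0, 2]
      = fun v => v 0 * v 1 ^ 5 + v 0 ^ 3 + v 2 ^ 2 := funext fC_eq_aux
  rw [e]
  have h0 := hasFDerivAt_apply (𝕜 := ℂ) (0 : Fin 3) p
  have h1 := hasFDerivAt_apply (𝕜 := ℂ) (1 : Fin 3) p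
  have h2 := hasFDerivAt_apply (𝕜 := ℂ) (2 : Fin 3) p
  refine (((h0.mul (h1.pow 5)).add (h0.pow 3)).add (h2.pow 2)).congr_fderiv ?_
  ext w
  simp
  ring

theorem stmt_9 :
    ∃ C D : Matrix (Fin 3) (Fin 3) ℕ,
      |detZ D| = 1 ∧
      Bmat ![6, 8, 15] = C * D ∧
      (∀ j, (∑ i : Fin 3, D i j) = ![6, 8, 15] j) ∧
      (∃ σ : Equiv.Perm (Fin 3),
        ∀ x y z : ℂ, fC C (fun i => ![x, y, z] (σ i)) = x ^ 3 + x * y ^ 5 + z ^ 2) ∧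
      IsolatedCriticalAtZero (fC C) := by
  refine ⟨!![1, 5, 0; 3, 0, 0; 0, 0, 2], !![2, 3, 5; 1, 1, 2; 3, 4, 8], ?_, ?_, ?_, ?_, ?_, ?_⟩
  · simp [detZ, Matrix.det_fin_three]
  · ext i j
    fin_cases i <;> fin_cases j <;> simp [Bmat, Matrix.mul_apply, Fin.sum_univ_three]
  · intro j
    fin_cases j <;> simp [Fin.sum_univ_three]
  · refine ⟨1, fun x y z => ?_⟩
    rw [fC_eq_aux]
    simp
    ring
  · rw [(fC_hasFDerivAt_aux 0).fderiv]
    ext w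
    simp
  · refine ⟨1, one_pos, fun p hp _ h => hp ?_⟩
    rw [(fC_hasFDerivAt_aux p).fderiv] at h
    have h0 := congrArg (fun L => L (Pi.single 0 1)) h
    have h1 := congrArg (fun L => L (Pi.single 1 1)) h
    have h2 := congrArg (fun L => L (Pi.single 2 1)) h
    simp at h0 h1 h2
    have k0 : p 0 = 0 := by
      rcases h1 with h1 | h1
      · exact h1
      · simpa [h1] using h0
    have k1 : p 1 = 0 := by simpa [k0] using h0
    ext i
    fin_cases i
    · exact k0
    · exact k1
    · exact h2
end
end

section
/- For the weight a = (4,6,11) (the weight of the Z₁₂-singularity), there exist 3×3 matrices C and D with non-negative integer entries such that |det D| = 1, B_a = C·D, (4,6,11) = (1,1,1)·D, f_C(x,y,z) = x³y + xy⁴ + z² after a permutation of the variables (x,y,z) (Z₁₂ is self-dual under strange duality), and f_C has an isolated critical point at the origin of ℂ³ (all partial derivatives of f_C vanish at 0, and there is a punctured neighborhood of 0 containing no critical point of f_C). -/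
open Matrix BigOperators

noncomputable section

/-- The exponent matrix of `x y⁴ + x³ y + z²`. -/
def Cz : Matrix (Fin 3) (Fin 3) ℕ := !![1, 4, 0; 3, 1, 0; 0, 0, 2]

lemma fC_Cz : fC Cz = fun v => v 0 * v 1 ^ 4 + v 0 ^ 3 * v 1 + v 2 ^ 2 := by
  funext v
  simp [fC, Cz, Fin.sum_univ_three, Fin.prod_univ_three]

lemma fderiv_Cz (p w : Fin 3 → ℂ) : fderiv ℂ (fC Cz) p w =
    (p 1 ^ 4 + 3 * p 0 ^ 2 * p 1) * w 0 + (4 * p 0 * p 1 ^ 3 + p 0 ^ 3) * w 1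
      + 2 * p 2 * w 2 := by
  have h (i : Fin 3) : HasFDerivAt (fun v : Fin 3 → ℂ => v i)
      (ContinuousLinearMap.proj (R := ℂ) (φ := fun _ : Fin 3 => ℂ) i) p :=
    hasFDerivAt_apply i p
  have H := (((h 0).mul ((h 1).pow 4)).add (((h 0).pow 3).mul (h 1))).add ((h 2).pow 2)
  rw [fC_Cz]
  have H2 := H.fderiv
  have H3 := congrArg (fun L : (Fin 3 → ℂ) →L[ℂ] ℂ => L w) H2
  refine Eq.trans H3 ?_
  simp
  ring

theorem stmt_10 :
    ∃ C D : Matrix (Fin 3) (Fin 3) ℕ,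
      |detZ D| = 1 ∧
      Bmat ![4, 6, 11] = C * D ∧
      (∀ j, (∑ i : Fin 3, D i j) = ![4, 6, 11] j) ∧
      (∃ σ : Equiv.Perm (Fin 3),
        ∀ x y z : ℂ, fC C (fun i => ![x, y, z] (σ i)) = x ^ 3 * y + x * y ^ 4 + z ^ 2) ∧
      IsolatedCriticalAtZero (fC C) := by
  refine ⟨Cz, !![1, 2, 3; 1, 1, 2; 2, 3, 6], ?_, ?_, ?_, ⟨1, ?_⟩, ?_, 1, one_pos, ?_⟩
  · simp [detZ, Matrix.det_fin_three]
  · ext i j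
    fin_cases i <;> fin_cases j <;> simp [Bmat, Cz, Matrix.mul_apply, Fin.sum_univ_three]
  · intro j
    fin_cases j <;> simp [Fin.sum_univ_three]
  · intro x y z
    simp [fC_Cz]
    ring
  · ext w
    simp [fderiv_Cz]
  · intro p hp _ h
    apply hp
    have e (w : Fin 3 → ℂ) := fderiv_Cz p w
    simp only [h] at e
    have e0 : p 1 ^ 4 + 3 * p 0 ^ 2 * p 1 = 0 := by simpa using (e ![1, 0, 0]).symm
    have e1 : 4 * p 0 * p 1 ^ 3 + p 0 ^ 3 = 0 := by simpa using (e ![0, 1, 0]).symm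
    have e2 : p 2 = 0 := by simpa using (e ![0, 0, 1]).symm
    have hx : p 0 = 0 := by
      have h5 : p 0 ^ 3 * p 1 = 0 := by linear_combination (4 * p 0 * e0 - p 1 * e1) / 11
      rcases mul_eq_zero.mp h5 with h6 | h6
      · exact pow_eq_zero_iff (by norm_num) |>.mp h6
      · rw [h6] at e1
        simpa using e1
    have hy : p 1 = 0 := by
      rw [hx] at e0
      simpa using e0
    ext i
    fin_cases i <;> simp [hx, hy, e2]
end
end

section
/- For the weight a = (4,5,10) (the weight of the W₁₂-singularity), there exist 3×3 matrices C and D with non-negative integer entries such that |det D| = 1, B_a = C·D, (4,5,10) = (1,1,1)·D, f_C(x,y,z) = x⁵ + y²z + z² after a permutation of the variables (x,y,z), and f_C has an isolated critical point at the origin of ℂ³ (all partial derivatives of f_C vanish at 0, and there is a punctured neighborhood of 0 containing no critical point of f_C). In particular, of the two normal forms x⁵ + y⁴ + z² and x⁵ + y²z + z² of the self-dual singularity W₁₂, only the latter arises as f_C. -/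
open Matrix BigOperators

noncomputable section

lemma pow_sum_aux (e a b c : ℕ) (he : e = 5 ∨ e = 4 ∨ e = 2)
    (h : 3 ^ a + 3 ^ b + 3 ^ c = 3 ^ e + 2) : e ∣ a ∧ e ∣ b ∧ e ∣ c := by
  have key : ∀ n : ℕ, 3 ^ n ≤ 3 ^ e + 2 → n ≤ e := by
    intro n hn
    by_contra hlt
    have h1 : 3 ^ (e + 1) ≤ 3 ^ n := Nat.pow_le_pow_right (by norm_num) (by omega)
    rcases he with rfl | rfl | rfl <;> norm_num at h1 hn <;> omega
  have ha := key a (h ▸ by rw [add_assoc]; exact Nat.le_add_right _ _)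
  have hb := key b (h ▸ by rw [add_right_comm]; exact Nat.le_add_left _ _)
  have hc := key c (h ▸ Nat.le_add_left _ _)
  have fin : ∀ e ∈ [5, 4, 2], ∀ a < e + 1, ∀ b < e + 1, ∀ c < e + 1,
      3 ^ a + 3 ^ b + 3 ^ c = 3 ^ e + 2 → e ∣ a ∧ e ∣ b ∧ e ∣ c := by
    set_option maxRecDepth 100000 in decide
  exact fin e (by simpa using he) a (by omega) b (by omega) c (by omega) h

lemma fC_update (C : Matrix (Fin 3) (Fin 3) ℕ) (j : Fin 3) :
    fC C (fun k => if k = j then 3 else 1) = 3 ^ C 0 j + 3 ^ C 1 j + 3 ^ C 2 j := by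
  simp only [fC, Fin.sum_univ_three, Fin.prod_univ_three]
  fin_cases j <;> simp

lemma col_dvd (C : Matrix (Fin 3) (Fin 3) ℕ) (σ : Equiv.Perm (Fin 3))
    (h : ∀ x y z : ℂ, fC C (fun i => ![x, y, z] (σ i)) = x ^ 5 + y ^ 4 + z ^ 2)
    (i j : Fin 3) : (![5, 4, 2] : Fin 3 → ℕ) (σ j) ∣ C i j := by
  have h1 := h (if σ j = 0 then 3 else 1) (if σ j = 1 then 3 else 1)
    (if σ j = 2 then 3 else 1)
  have h2 : (fun k => (![(if σ j = 0 then 3 else 1), (if σ j = 1 then 3 else 1),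
      (if σ j = 2 then 3 else 1)] : Fin 3 → ℂ) (σ k)) = fun k => if k = j then 3 else 1 := by
    funext k
    have : k = j ↔ σ k = σ j := by simp
    simp only [this]
    generalize σ k = s
    generalize σ j = t
    fin_cases s <;> fin_cases t <;> simp
  rw [h2, fC_update] at h1
  have h3 : 3 ^ C 0 j + 3 ^ C 1 j + 3 ^ C 2 j = 3 ^ ((![5, 4, 2] : Fin 3 → ℕ) (σ j)) + 2 := by
    have : ((3 ^ C 0 j + 3 ^ C 1 j + 3 ^ C 2 j : ℕ) : ℂ)
        = ((3 ^ ((![5, 4, 2] : Fin 3 → ℕ) (σ j)) + 2 : ℕ) : ℂ) := by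
      push_cast
      rw [h1]
      generalize σ j = t
      fin_cases t <;> simp <;> norm_num
    exact_mod_cast this
  have h4 := pow_sum_aux _ _ _ _ (by generalize σ j = t; fin_cases t <;> simp) h3
  fin_cases i
  exacts [h4.1, h4.2.1, h4.2.2]

lemma det_dvd (C : Matrix (Fin 3) (Fin 3) ℕ) (σ : Equiv.Perm (Fin 3))
    (h : ∀ i j, (![5, 4, 2] : Fin 3 → ℕ) (σ j) ∣ C i j) : (40 : ℤ) ∣ detZ C := by
  choose M hM using h
  have : C.map (fun n : ℕ => (n : ℤ)) =
      Matrix.of (fun i j => (M i j : ℤ)) *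
        Matrix.diagonal (fun j => (((![5, 4, 2] : Fin 3 → ℕ) (σ j) : ℕ) : ℤ)) := by
    ext i j
    rw [Matrix.mul_diagonal, Matrix.map_apply, hM, Matrix.of_apply]
    push_cast
    ring
  rw [detZ, this, Matrix.det_mul, Matrix.det_diagonal,
    Equiv.prod_comp σ (fun s => (((![5, 4, 2] : Fin 3 → ℕ) s : ℕ) : ℤ))]
  simp [Fin.prod_univ_three]

lemma detZ_mul (C D : Matrix (Fin 3) (Fin 3) ℕ) : detZ (C * D) = detZ C * detZ D := by
  rw [detZ, detZ, detZ, ← Matrix.det_mul]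
  congr 1

lemma detZ_B : detZ (Bmat ![4, 5, 10]) = 20 := by
  simp [detZ, Matrix.det_fin_three, Bmat]

lemma fC_W12 : fC !![5, 0, 0; 0, 0, 2; 0, 2, 1] =
    fun v => v 0 ^ 5 + v 2 ^ 2 + v 1 ^ 2 * v 2 := by
  funext v
  simp [fC, Fin.sum_univ_three, Fin.prod_univ_three]

lemma hasFDeriv_W12 (p : Fin 3 → ℂ) :
    HasFDerivAt (fun v : Fin 3 → ℂ => v 0 ^ 5 + v 2 ^ 2 + v 1 ^ 2 * v 2)
      ((5 * p 0 ^ 4) • ContinuousLinearMap.proj (R := ℂ) (φ := fun _ : Fin 3 => ℂ) 0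
        + (2 * p 1 * p 2) • ContinuousLinearMap.proj (R := ℂ) (φ := fun _ : Fin 3 => ℂ) 1
        + (2 * p 2 + p 1 ^ 2) •
          ContinuousLinearMap.proj (R := ℂ) (φ := fun _ : Fin 3 => ℂ) 2) p := by
  have h (i : Fin 3) : HasFDerivAt (fun v : Fin 3 → ℂ => v i)
      (ContinuousLinearMap.proj (R := ℂ) (φ := fun _ : Fin 3 => ℂ) i) p :=
    hasFDerivAt_apply i p
  have := (((h 0).pow 5).add ((h 2).pow 2)).add (((h 1).pow 2).mul (h 2))
  refine this.congr_fderiv ?_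
  ext v
  simp
  ring

lemma isolated_W12 : IsolatedCriticalAtZero (fC !![5, 0, 0; 0, 0, 2; 0, 2, 1]) := by
  rw [fC_W12]
  refine ⟨?_, 1, one_pos, ?_⟩
  · rw [(hasFDeriv_W12 0).fderiv]
    ext v
    simp
  · intro p hp _ h0
    rw [(hasFDeriv_W12 p).fderiv] at h0
    apply hp
    have e (v : Fin 3 → ℂ) := DFunLike.congr_fun h0 v
    have e0 := e ![1, 0, 0]
    have e1 := e ![0, 1, 0]
    have e2 := e ![0, 0, 1]
    simp at e0 e1 e2
    have h12 : p 1 = 0 ∧ p 2 = 0 := by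
      rcases e1 with h | h
      · rw [h] at e2
        simpa [h] using e2
      · rw [h] at e2
        simpa [h] using e2
    funext i
    fin_cases i
    exacts [e0, h12.1, h12.2]

theorem stmt_12 :
    (∃ C D : Matrix (Fin 3) (Fin 3) ℕ,
      |detZ D| = 1 ∧
      Bmat ![4, 5, 10] = C * D ∧
      (∀ j, (∑ i : Fin 3, D i j) = ![4, 5, 10] j) ∧
      (∃ σ : Equiv.Perm (Fin 3),
        ∀ x y z : ℂ, fC C (fun i => ![x, y, z] (σ i)) = x ^ 5 + y ^ 2 * z + z ^ 2) ∧
      IsolatedCriticalAtZero (fC C)) ∧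
    (∀ C D : Matrix (Fin 3) (Fin 3) ℕ,
      |detZ D| = 1 →
      Bmat ![4, 5, 10] = C * D →
      (∀ j, (∑ i : Fin 3, D i j) = ![4, 5, 10] j) →
      IsolatedCriticalAtZero (fC C) →
      ¬ ∃ σ : Equiv.Perm (Fin 3),
          ∀ x y z : ℂ, fC C (fun i => ![x, y, z] (σ i)) = x ^ 5 + y ^ 4 + z ^ 2) := by
  refine ⟨⟨!![5, 0, 0; 0, 0, 2; 0, 2, 1], !![1, 1, 2; 1, 1, 3; 2, 3, 5], ?_, ?_, ?_,
    ⟨Equiv.refl _, ?_⟩, isolated_W12⟩, ?_⟩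
  · simp [detZ, Matrix.det_fin_three]
  · ext i j
    fin_cases i <;> fin_cases j <;> simp [Bmat, Matrix.mul_apply, Fin.sum_univ_three]
  · intro j
    fin_cases j <;> simp [Fin.sum_univ_three]
  · intro x y z
    rw [fC_W12]
    simp
    ring
  · rintro C D - hB - - ⟨σ, h⟩
    have h1 := det_dvd C σ (col_dvd C σ h)
    have h2 := detZ_mul C D
    rw [← hB, detZ_B] at h2
    have h3 : (40 : ℤ) ∣ 20 := h2 ▸ h1.mul_right _
    norm_num at h3
end
end

section
/- For the weight a = (3,4,8) (the weight of the W₁₃-singularity), there exist 3×3 matrices C and D with non-negative integer entries such that |det D| = 1, B_a = C·D, (3,4,8) = (1,1,1)·D, f_C(x,y,z) = x⁴ + y²z + xz² after a permutation of the variables (x,y,z) (the normal form of the strange dual singularity S₁₁), and f_C has an isolated critical point at the origin of ℂ³ (all partial derivatives of f_C vanish at 0, and there is a punctured neighborhood of 0 containing no critical point of f_C). -/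
open Matrix BigOperators

noncomputable section

/-- The exponent matrix of `x⁴ + x z² + y² z`. -/
def C13 : Matrix (Fin 3) (Fin 3) ℕ := !![4, 0, 0; 1, 0, 2; 0, 2, 1]

theorem fC_C13 : fC C13 = fun v => v 0 ^ 4 + v 0 * v 2 ^ 2 + v 1 ^ 2 * v 2 := by
  funext v
  simp [fC, C13, Fin.sum_univ_three, Fin.prod_univ_three]

theorem fderiv_C13 (p w : Fin 3 → ℂ) :
    fderiv ℂ (fC C13) p w =
      (4 * p 0 ^ 3 + p 2 ^ 2) * w 0 + 2 * p 1 * p 2 * w 1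
        + (p 1 ^ 2 + 2 * p 0 * p 2) * w 2 := by
  have h (i : Fin 3) : HasFDerivAt (fun v : Fin 3 → ℂ => v i)
      (ContinuousLinearMap.proj (R := ℂ) (φ := fun _ : Fin 3 => ℂ) i) p :=
    hasFDerivAt_apply i p
  have H := (((h 0).pow 4).add ((h 0).mul ((h 2).pow 2))).add (((h 1).pow 2).mul (h 2))
  rw [fC_C13]
  refine (congrArg (fun L : (Fin 3 → ℂ) →L[ℂ] ℂ => L w) H.fderiv).trans ?_
  simp
  ring

theorem isolated_C13 : IsolatedCriticalAtZero (fC C13) := by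
  refine ⟨?_, 1, one_pos, ?_⟩
  · ext w
    simp [fderiv_C13]
  · intro p hp _ h0
    apply hp
    have e (w : Fin 3 → ℂ) := (fderiv_C13 p w).symm.trans (by rw [h0]; rfl : _ = (0 : ℂ))
    have e0 := e ![1, 0, 0]
    have e1 := e ![0, 1, 0]
    have e2 := e ![0, 0, 1]
    simp at e0 e1 e2
    have key : p 0 = 0 ∧ p 1 = 0 ∧ p 2 = 0 := by
      rcases e1 with h | h
      · rw [h] at e2
        simp at e2
        rcases e2 with h' | h' <;> simp [h'] at e0 <;> exact ⟨by assumption, h, by assumption⟩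
      · rw [h] at e0 e2
        simp at e0 e2
        exact ⟨e0, e2, h⟩
    funext i
    fin_cases i
    · exact key.1
    · exact key.2.1
    · exact key.2.2

theorem stmt_13 :
    ∃ C D : Matrix (Fin 3) (Fin 3) ℕ,
      |detZ D| = 1 ∧
      Bmat ![3, 4, 8] = C * D ∧
      (∀ j, (∑ i : Fin 3, D i j) = ![3, 4, 8] j) ∧
      (∃ σ : Equiv.Perm (Fin 3),
        ∀ x y z : ℂ, fC C (fun i => ![x, y, z] (σ i)) = x ^ 4 + y ^ 2 * z + x * z ^ 2) ∧
      IsolatedCriticalAtZero (fC C) := by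
  refine ⟨C13, !![1, 1, 2; 1, 1, 3; 1, 2, 3], ?_, ?_, ?_, ⟨1, ?_⟩, isolated_C13⟩
  · simp [detZ, Matrix.det_fin_three]
  · ext i j
    fin_cases i <;> fin_cases j <;>
      simp [Bmat, C13, Matrix.mul_apply, Fin.sum_univ_three]
  · intro j
    fin_cases j <;> simp [Fin.sum_univ_three]
  · intro x y z
    rw [fC_C13]
    simp
    ring
end
end

section
/- For the weight a = (3,4,5) (the weight of the S₁₂-singularity), there exist 3×3 matrices C and D with non-negative integer entries such that |det D| = 1, B_a = C·D, (3,4,5) = (1,1,1)·D, f_C(x,y,z) = x³y + y²z + xz² after a permutation of the variables (x,y,z) (S₁₂ is self-dual under strange duality), and f_C has an isolated critical point at the origin of ℂ³ (all partial derivatives of f_C vanish at 0, and there is a punctured neighborhood of 0 containing no critical point of f_C). -/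
open Matrix BigOperators

noncomputable section

lemma fC_eq : fC !![3,1,0;1,0,2;0,2,1] =
    fun v => v 0 ^ 3 * v 1 + v 0 * v 2 ^ 2 + v 1 ^ 2 * v 2 := by
  funext v
  simp [fC, Fin.sum_univ_three, Fin.prod_univ_three]

/-- The derivative of `x³y + xz² + y²z`. -/
lemma fC_fderiv (p w : Fin 3 → ℂ) : fderiv ℂ (fC !![3,1,0;1,0,2;0,2,1]) p w =
    (3 * p 0 ^ 2 * p 1 + p 2 ^ 2) * w 0 + (p 0 ^ 3 + 2 * p 1 * p 2) * w 1 +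
      (2 * p 0 * p 2 + p 1 ^ 2) * w 2 := by
  rw [fC_eq]
  have h (i : Fin 3) : HasFDerivAt (fun v : Fin 3 → ℂ => v i)
      (ContinuousLinearMap.proj (R := ℂ) (φ := fun _ : Fin 3 => ℂ) i) p :=
    hasFDerivAt_apply i p
  have H := ((((h 0).pow 3).mul (h 1)).add ((h 0).mul ((h 2).pow 2))).add
    (((h 1).pow 2).mul (h 2))
  have e := H.fderiv
  refine (congrArg (fun L => L w) e).trans ?_
  simp
  ring

theorem stmt_14 :
    ∃ C D : Matrix (Fin 3) (Fin 3) ℕ,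
      |detZ D| = 1 ∧
      Bmat ![3, 4, 5] = C * D ∧
      (∀ j, (∑ i : Fin 3, D i j) = ![3, 4, 5] j) ∧
      (∃ σ : Equiv.Perm (Fin 3),
        ∀ x y z : ℂ, fC C (fun i => ![x, y, z] (σ i)) = x ^ 3 * y + y ^ 2 * z + x * z ^ 2) ∧
      IsolatedCriticalAtZero (fC C) := by
  refine ⟨!![3,1,0;1,0,2;0,2,1], !![1,1,1;1,1,2;1,2,2], ?_, ?_, ?_, ⟨1, ?_⟩, ?_, 1, one_pos, ?_⟩
  · simp [detZ, Matrix.det_fin_three]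
  · ext i j
    fin_cases i <;> fin_cases j <;> simp [Bmat, Matrix.mul_apply, Fin.sum_univ_three]
  · intro j
    fin_cases j <;> simp [Fin.sum_univ_three]
  · intro x y z
    rw [fC_eq]
    simp
    ring
  · ext w
    rw [fC_fderiv]
    simp
  · intro p hp _ h0
    apply hp
    have e0 := fC_fderiv p ![1, 0, 0]
    have e1 := fC_fderiv p ![0, 1, 0]
    have e2 := fC_fderiv p ![0, 0, 1]
    rw [h0] at e0 e1 e2
    simp at e0 e1 e2
    have hA : p 0 ^ 3 * p 1 = 0 := by
      linear_combination (-(4 / 13 : ℂ) * p 0) * e0 + (-(1 / 13 : ℂ) * p 1) * e1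
        + ((2 / 13 : ℂ) * p 2) * e2
    have hx : p 0 = 0 := by
      rcases mul_eq_zero.1 hA with h | h
      · exact pow_eq_zero_iff (by norm_num) |>.1 h
      · rw [h] at e1
        simpa using e1.symm
    rw [hx] at e0 e2
    have hz : p 2 = 0 := by simpa using e0.symm
    have hy : p 1 = 0 := by simpa using e2.symm
    funext i
    fin_cases i <;> simp [hx, hy, hz]
end
end

section
/- For the weight a = (3,4,4) (the weight of the U₁₂-singularity), there exist 3×3 matrices C and D with non-negative integer entries such that |det D| = 1, B_a = C·D, (3,4,4) = (1,1,1)·D, and f_C has an isolated critical point at the origin of ℂ³ (all partial derivatives of f_C vanish at 0, and there is a punctured neighborhood of 0 containing no critical point of f_C); moreover any such C satisfies |det C| = 12. -/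
open Matrix BigOperators

noncomputable section

def Cw : Matrix (Fin 3) (Fin 3) ℕ := !![0, 0, 4; 2, 1, 0; 1, 2, 0]
def Dw : Matrix (Fin 3) (Fin 3) ℕ := !![1, 2, 1; 1, 1, 2; 1, 1, 1]

lemma fC_Cw : fC Cw = fun v => v 2 ^ 4 + v 0 ^ 2 * v 1 + v 0 * v 1 ^ 2 := by
  funext v
  simp [fC, Cw, Fin.sum_univ_three, Fin.prod_univ_three]

lemma fderiv_Cw (p w : Fin 3 → ℂ) : fderiv ℂ (fC Cw) p w =
    4 * p 2 ^ 3 * w 2 + (2 * p 0 * p 1 + p 1 ^ 2) * w 0 + (p 0 ^ 2 + 2 * p 0 * p 1) * w 1 := by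
  have h (i : Fin 3) : HasFDerivAt (fun v : Fin 3 → ℂ => v i)
      (ContinuousLinearMap.proj (R := ℂ) (φ := fun _ : Fin 3 => ℂ) i) p := hasFDerivAt_apply i p
  have H := (((h 2).pow 4).add (((h 0).pow 2).mul (h 1))).add ((h 0).mul ((h 1).pow 2))
  have e : fC Cw = ((fun x : Fin 3 → ℂ => x 2 ^ 4) + (fun x : Fin 3 → ℂ => x 0 ^ 2) *
      fun v : Fin 3 → ℂ => v 1) + (fun v : Fin 3 → ℂ => v 0) * fun x : Fin 3 → ℂ => x 1 ^ 2 :=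
    fC_Cw
  rw [e, H.fderiv]
  simp
  ring

lemma isolated_Cw : IsolatedCriticalAtZero (fC Cw) := by
  refine ⟨?_, 1, one_pos, ?_⟩
  · ext w
    simp [fderiv_Cw]
  · intro p hp _ h0
    apply hp
    have h (w : Fin 3 → ℂ) := fderiv_Cw p w
    simp only [h0] at h
    have h2 := h ![0, 0, 1]
    have hx := h ![1, 0, 0]
    have hy := h ![0, 1, 0]
    simp at h2 hx hy
    have e1 : p 0 ^ 3 = 0 := by
      linear_combination (4 / 3 * p 0) * hx - (p 0 + 2 / 3 * p 1) * hy
    have e2 : p 1 ^ 3 = 0 := by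
      linear_combination (4 / 3 * p 1) * hy - (p 1 + 2 / 3 * p 0) * hx
    have e1' := pow_eq_zero_iff (three_ne_zero) |>.1 e1
    have e2' := pow_eq_zero_iff (three_ne_zero) |>.1 e2
    funext i
    fin_cases i <;> simp [e1', e2', h2]

theorem stmt_19 :
    (∃ C D : Matrix (Fin 3) (Fin 3) ℕ,
      |detZ D| = 1 ∧
      Bmat ![3, 4, 4] = C * D ∧
      (∀ j, (∑ i : Fin 3, D i j) = ![3, 4, 4] j) ∧
      IsolatedCriticalAtZero (fC C)) ∧
    (∀ C D : Matrix (Fin 3) (Fin 3) ℕ,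
      |detZ D| = 1 →
      Bmat ![3, 4, 4] = C * D →
      (∀ j, (∑ i : Fin 3, D i j) = ![3, 4, 4] j) →
      IsolatedCriticalAtZero (fC C) →
      |detZ C| = 12) := by
  constructor
  · refine ⟨Cw, Dw, ?_, ?_, ?_, isolated_Cw⟩
    · simp [detZ, Dw, Matrix.det_fin_three]
    · ext i j
      fin_cases i <;> fin_cases j <;> simp [Bmat, Cw, Dw, Matrix.mul_apply, Fin.sum_univ_three]
    · intro j
      fin_cases j <;> simp [Dw, Fin.sum_univ_three]
  · intro C D hD hB _ _
    have hm : detZ (C * D) = detZ C * detZ D := by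
      unfold detZ
      rw [← Matrix.det_mul]
      exact congrArg Matrix.det (Matrix.map_mul (f := Nat.castRingHom ℤ))
    have hb : detZ (Bmat ![3, 4, 4]) = 12 := by
      simp [detZ, Bmat, Matrix.det_fin_three]
    rw [← hB, hb] at hm
    have := congrArg abs hm
    rw [abs_mul, hD, mul_one] at this
    rw [← this]
    norm_num
end
end
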